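/- X_F is exactly the set of balanced bi-infinite words over 𝒜 = {0,1}: a bi-infinite word x ∈ 𝒜^ℤ has no factor in F if and only if x is balanced. -/

import Mathlib

/-- `u` occurs as a block of consecutive letters of the bi-infinite word `x : ℤ → Bool`. -/
def IsFactorZ (u : List Bool) (x : ℤ → Bool) : Prop :=
  ∃ i : ℤ, ∀ k : ℕ, k < u.length → x (i + k) = u.getD k false

/-- `u` occurs as a block of consecutive letters of the right-infinite word `y : ℕ → Bool`. -/
def IsFactorN (u : List Bool) (y : ℕ → Bool) : Prop :=
  ∃ i : ℕ, ∀ k : ℕ, k < u.length → y (i + k) = u.getD k false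

/-- The forbidden word `0v01ṽ1` (with `0 = false`, `1 = true`). -/
def forbidden1 (v : List Bool) : List Bool :=
  [false] ++ v ++ [false, true] ++ v.reverse ++ [true]

/-- The forbidden word `1v10ṽ0` (with `0 = false`, `1 = true`). -/
def forbidden2 (v : List Bool) : List Bool :=
  [true] ++ v ++ [true, false] ++ v.reverse ++ [false]

/-- Membership in the subshift `X_F`: no factor of `x` lies in `F`. -/
def memXF (x : ℤ → Bool) : Prop :=
  ∀ v : List Bool, ¬ IsFactorZ (forbidden1 v) x ∧ ¬ IsFactorZ (forbidden2 v) x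

/-- Membership in the one-sided subshift `Y_F`: no factor of `y` lies in `F`. -/
def memYF (y : ℕ → Bool) : Prop :=
  ∀ v : List Bool, ¬ IsFactorN (forbidden1 v) y ∧ ¬ IsFactorN (forbidden2 v) y

/-- A finite word is balanced if any two factors of equal length have numbers of
occurrences of `1` differing by at most one. -/
def BalancedL (w : List Bool) : Prop :=
  ∀ u v : List Bool, u <:+: w → v <:+: w → u.length = v.length →
    |(u.count true : ℤ) - (v.count true : ℤ)| ≤ 1

/-- A right-infinite word is balanced if any two factors of equal length have numbers of
occurrences of `1` differing by at most one. -/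
def BalancedN (y : ℕ → Bool) : Prop :=
  ∀ u v : List Bool, IsFactorN u y → IsFactorN v y → u.length = v.length →
    |(u.count true : ℤ) - (v.count true : ℤ)| ≤ 1

/-- A bi-infinite word is balanced if any two factors of equal length have numbers of
occurrences of `1` differing by at most one. -/
def BalancedZ (x : ℤ → Bool) : Prop :=
  ∀ u v : List Bool, IsFactorZ u x → IsFactorZ v x → u.length = v.length →
    |(u.count true : ℤ) - (v.count true : ℤ)| ≤ 1

/-- `u` occurs in `x` at position `i`. -/
def OccAt (u : List Bool) (x : ℤ → Bool) (i : ℤ) : Prop :=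
  ∀ k : ℕ, k < u.length → x (i + k) = u.getD k false

theorem occ_nil (x : ℤ → Bool) (i : ℤ) : OccAt [] x i := by
  intro k hk; simp at hk

theorem occ_cons (a : Bool) (u : List Bool) (x : ℤ → Bool) (i : ℤ) :
    OccAt (a :: u) x i ↔ x i = a ∧ OccAt u x (i + 1) := by
  constructor
  · intro h
    refine ⟨by simpa using h 0 (by simp), fun k hk => ?_⟩
    have := h (k + 1) (by simpa using hk)
    rw [List.getD_cons_succ] at this
    rw [← this]; congr 1; push_cast; ring
  · rintro ⟨h0, h⟩ k hk
    cases k with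
    | zero => simpa using h0
    | succ k =>
      have := h k (by simpa using hk)
      rw [List.getD_cons_succ, ← this]; congr 1; push_cast; ring

theorem occ_append (u v : List Bool) (x : ℤ → Bool) (i : ℤ) :
    OccAt (u ++ v) x i ↔ OccAt u x i ∧ OccAt v x (i + u.length) := by
  induction u generalizing i with
  | nil => simp [occ_nil]
  | cons a u ih =>
    rw [List.cons_append, occ_cons, occ_cons, ih, and_assoc]
    have : i + 1 + (u.length : ℤ) = i + ((a :: u).length : ℤ) := by
      simp only [List.length_cons]; push_cast; ring
    rw [this]

theorem occ_map (x : ℤ → Bool) (i : ℤ) (n : ℕ) :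
    OccAt ((List.range n).map fun k : ℕ => x (i + k)) x i := by
  intro k hk
  rw [List.getD_eq_getElem _ _ hk]; simp

theorem occ_reverse (v : List Bool) (x : ℤ → Bool) (i : ℤ)
    (h : ∀ k : ℕ, (hk : k < v.length) → x (i + v.length - 1 - k) = v[k]) :
    OccAt v.reverse x i := by
  intro k hk
  have hk' : k < v.length := by simpa using hk
  rw [List.getD_eq_getElem _ _ hk, List.getElem_reverse, ← h]
  congr 1; omega

/-- letter value -/
def bv (b : Bool) : ℤ := if b then 1 else 0

theorem occ_count (P : ℤ → ℤ) (x : ℤ → Bool) (hP : ∀ k, P (k + 1) = P k + bv (x k))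
    (u : List Bool) (i : ℤ) (h : OccAt u x i) :
    (u.count true : ℤ) = P (i + u.length) - P i := by
  induction u generalizing i with
  | nil => simp
  | cons a u ih =>
    rw [occ_cons] at h
    have h1 := ih _ h.2
    have h2 := hP i
    have : i + 1 + (u.length : ℤ) = i + ((a :: u).length : ℤ) := by
      simp only [List.length_cons]; push_cast; ring
    rw [this] at h1
    rw [h.1] at h2
    cases a <;> simp [bv] at h2 h1 ⊢ <;> omega

theorem exists_P (x : ℤ → Bool) : ∃ P : ℤ → ℤ, ∀ k, P (k + 1) = P k + bv (x k) := by
  refine ⟨fun k => ∑ t ∈ Finset.range k.toNat, bv (x t)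
    - ∑ t ∈ Finset.range (-k).toNat, bv (x (-1 - t)), fun k => ?_⟩
  rcases le_or_gt 0 k with hk | hk
  · obtain ⟨m, rfl⟩ := Int.eq_ofNat_of_zero_le hk
    have e1 : ((m : ℤ) + 1).toNat = m + 1 := by omega
    have e2 : (-((m : ℤ) + 1)).toNat = 0 := by omega
    have e3 : (-(m : ℤ)).toNat = 0 := by omega
    have e4 : (m : ℤ).toNat = m := by omega
    simp only [e1, e2, e3, e4, Finset.sum_range_succ]; simp
  · obtain ⟨m, rfl⟩ : ∃ m : ℕ, k = -1 - m := ⟨(-1 - k).toNat, by omega⟩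
    have e1 : (-1 - (m : ℤ) + 1).toNat = 0 := by omega
    have e2 : (-(-1 - (m : ℤ) + 1)).toNat = m := by omega
    have e3 : (-(-1 - (m : ℤ))).toNat = m + 1 := by omega
    have e4 : (-1 - (m : ℤ)).toNat = 0 := by omega
    simp only [e1, e2, e3, e4, Finset.sum_range_succ]; simp

def M1 (x : ℤ → Bool) : Prop :=
  ∀ (c : ℤ) (T : ℕ), x c = false → x (c + 1) = true → 1 ≤ T →
    (∀ t : ℕ, 1 ≤ t → t < T → x (c - t) = x (c + 1 + t)) →
    x (c - T) = false → x (c + 1 + T) = true → False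

def M2 (x : ℤ → Bool) : Prop :=
  ∀ (c : ℤ) (T : ℕ), x c = true → x (c + 1) = false → 1 ≤ T →
    (∀ t : ℕ, 1 ≤ t → t < T → x (c - t) = x (c + 1 + t)) →
    x (c - T) = true → x (c + 1 + T) = false → False

theorem occ_sym (x : ℤ → Bool) (a b : Bool) (c : ℤ) (T : ℕ) (h0 : x c = a) (h1 : x (c + 1) = b)
    (hT : 1 ≤ T) (h : ∀ t : ℕ, 1 ≤ t → t < T → x (c - t) = x (c + 1 + t))
    (h2 : x (c - T) = a) (h3 : x (c + 1 + T) = b) :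
    ∃ v : List Bool, OccAt ([a] ++ v ++ [a, b] ++ v.reverse ++ [b]) x (c - T) := by
  refine ⟨(List.range (T - 1)).map fun k : ℕ => x (c - T + 1 + k), ?_⟩
  obtain ⟨n, rfl⟩ : ∃ n, T = n + 1 := ⟨T - 1, by omega⟩
  simp only [occ_append, occ_cons, List.length_append, List.length_map, List.length_range,
    List.length_reverse, List.length_cons, List.length_nil]
  refine ⟨⟨⟨⟨⟨h2, occ_nil _ _⟩, ?_⟩, ?_, ?_, occ_nil _ _⟩, ?_⟩, ?_, occ_nil _ _⟩
  · exact occ_map x _ _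
  · rw [← h0]; congr 1; push_cast; omega
  · rw [← h1]; congr 1; push_cast; omega
  · apply occ_reverse
    intro k hk
    simp only [List.length_map, List.length_range] at hk ⊢
    simp only [List.getElem_map, List.getElem_range]
    have := h (n - k) (by omega) (by omega)
    have e1 : c - ((n + 1 : ℕ) : ℤ) + 1 + k = c - ((n - k : ℕ) : ℤ) := by omega
    rw [e1, this]; congr 1; push_cast; omega
  · rw [← h3]; congr 1; push_cast; omega

theorem memXF_M1 (x : ℤ → Bool) (h : memXF x) : M1 x := by
  intro c T h0 h1 hT ha h2 h3
  obtain ⟨v, hv⟩ := occ_sym x _ _ c T h0 h1 hT ha h2 h3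
  exact (h v).1 ⟨_, hv⟩

theorem memXF_M2 (x : ℤ → Bool) (h : memXF x) : M2 x := by
  intro c T h0 h1 hT ha h2 h3
  obtain ⟨v, hv⟩ := occ_sym x _ _ c T h0 h1 hT ha h2 h3
  exact (h v).2 ⟨_, hv⟩

theorem M2_rev (x : ℤ → Bool) (h : M2 x) : M1 (fun k => x (-1 - k)) := by
  intro c T h0 h1 hT ha h2 h3
  refine h (-1 - (c + 1)) T h1 ?_ hT ?_ ?_ ?_
  · rw [← h0]; simp only; congr 1; ring
  · intro t ht1 ht2
    have := ha t ht1 ht2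
    simp only at this
    convert this.symm using 2 <;> ring
  · rw [← h3]; simp only; congr 1; ring
  · rw [← h2]; simp only; congr 1; ring

theorem bv_range (b : Bool) : 0 ≤ bv b ∧ bv b ≤ 1 := by cases b <;> simp [bv]
theorem bv_inj {a b : Bool} (h : bv a = bv b) : a = b := by
  cases a <;> cases b <;> simp [bv] at h ⊢
theorem bv_zero {b : Bool} (h : bv b = 0) : b = false := bv_inj h
theorem bv_one {b : Bool} (h : bv b = 1) : b = true := bv_inj h

theorem refl_sum (x : ℤ → Bool) (P : ℤ → ℤ) (hP : ∀ k, P (k + 1) = P k + bv (x k)) (c : ℤ) (s : ℕ)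
    (h : ∀ t : ℕ, 1 ≤ t → t ≤ s → x (c - t) = x (c + 1 + t)) :
    P c - P (c - s) = P (c + 2 + s) - P (c + 2) := by
  induction s with
  | zero => simp
  | succ s ih =>
    have h1 := ih fun t a b => h t a (by omega)
    have h2 := h (s + 1) (by omega) le_rfl
    have h3 := hP (c - (s + 1 : ℕ))
    have h4 := hP (c + 1 + (s + 1 : ℕ))
    rw [h2] at h3
    have e1 : c - ((s + 1 : ℕ) : ℤ) + 1 = c - s := by push_cast; ring
    have e2 : c + 1 + ((s + 1 : ℕ) : ℤ) + 1 = c + 2 + (s + 1 : ℕ) := by push_cast; ring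
    have e3 : c + 1 + ((s + 1 : ℕ) : ℤ) = c + 2 + s := by push_cast; ring
    rw [e1, e3] at h3
    rw [e2, e3] at h4
    linarith

theorem main_lemma (x : ℤ → Bool) (P : ℤ → ℤ) (hP : ∀ k, P (k + 1) = P k + bv (x k))
    (hM : M1 x) (n : ℕ)
    (hbal : ∀ k : ℕ, k < n → ∀ a b : ℤ, (P (b + k) - P b) - (P (a + k) - P a) ≤ 1)
    (i j : ℤ) (hij : i < j) (hun : 2 ≤ (P (j + n) - P j) - (P (i + n) - P i))
    (hmin : ∀ i' j' : ℤ, 2 ≤ (P (j' + n) - P j') - (P (i' + n) - P i') →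
      (j - i).natAbs ≤ (j' - i').natAbs) : False := by
  -- step
  have st : ∀ k, P k ≤ P (k + 1) ∧ P (k + 1) ≤ P k + 1 := fun k => by
    have := hP k; have := bv_range (x k); omega
  -- window sums
  obtain ⟨H, hH⟩ : ∃ H : ℤ → ℤ, ∀ k, H k = P (k + n) - P k := ⟨_, fun _ => rfl⟩
  have hHs : ∀ k, H (k + 1) = H k + bv (x (k + n)) - bv (x k) := fun k => by
    rw [hH, hH, hP k]
    have := hP (k + n)
    rw [show k + 1 + (n : ℤ) = k + n + 1 by ring]; omega
  have hun' : 2 ≤ H j - H i := by rw [hH, hH]; exact hun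
  have hmin' : ∀ i' j' : ℤ, (j' - i').natAbs < (j - i).natAbs → H j' - H i' ≤ 1 := by
    intro i' j' h
    by_contra h2
    have := hmin i' j' (by rw [← hH, ← hH]; omega)
    omega
  clear hmin
  have hj1 : i + 1 < j := by
    by_contra h
    have : j = i + 1 := by omega
    subst this
    have := hHs i; have := bv_range (x i); have := bv_range (x (i + n)); omega
  have hHj := hHs (j - 1)
  have hHi := hHs i
  rw [show j - 1 + 1 = j by ring] at hHj
  have b1 := bv_range (x i)
  have b2 := bv_range (x (i + n))
  have b3 := bv_range (x (j - 1))
  have b4 := bv_range (x (j - 1 + n))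
  have hb1 := hmin' i (j - 1) (by omega)
  have hb2 := hmin' (i + 1) j (by omega)
  have hHeq : H j = H i + 2 := by omega
  have hmid : ∀ k, i < k → k < j → H k = H i + 1 := by
    intro k h1 h2
    have := hmin' i k (by omega)
    have := hmin' k j (by omega)
    omega
  have x1 : x i = false := bv_zero (by omega)
  have x2 : x (i + n) = true := bv_one (by omega)
  have x3 : x (j - 1) = false := bv_zero (by omega)
  have x4 : x (j - 1 + n) = true := bv_one (by omega)
  have hper : ∀ k, i < k → k < j - 1 → x (k + n) = x k := by
    intro k h1 h2
    have := hHs k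
    have := hmid k h1 (by omega)
    have := hmid (k + 1) (by omega) (by omega)
    exact bv_inj (by omega)
  have hn : 2 ≤ n := by
    by_contra h
    interval_cases n
    · simp at hun
    · have := st i; have := st j; push_cast at hun; omega
  -- prefixes
  have hHi' := hH i
  have hHj' := hH j
  have pre : ∀ k : ℕ, 0 < k → k < n → P (j + k) - P j = P (i + k) - P i + 1 := by
    intro k h1 h2
    have u1 := hbal k h2 i j
    have u2 := hbal (n - k) (by omega) (i + k) (j + k)
    rw [show j + (k : ℤ) + (n - k : ℕ) = j + n by omega,
      show i + (k : ℤ) + (n - k : ℕ) = i + n by omega] at u2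
    omega
  have pal : ∀ k : ℕ, 0 < k → k < n → P (i + k) - P i = P (i + n) - P (i + n - k) := by
    intro k h1 h2
    have u1 := pre k h1 h2
    have u2 := pre (n - k) (by omega) (by omega)
    have u3 := hbal k h2 (i + n - k) j
    have u4 := hbal k h2 i (j + n - k)
    rw [show j + ((n - k : ℕ) : ℤ) = j + n - k by omega,
      show i + ((n - k : ℕ) : ℤ) = i + n - k by omega] at u2
    rw [show i + (n : ℤ) - k + k = i + n by ring] at u3
    rw [show j + (n : ℤ) - k + k = j + n by ring] at u4
    omega
  have xpal : ∀ t : ℕ, t < n → x (i + t) = x (i + n - 1 - t) := by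
    intro t ht
    have q1 := hP (i + t)
    have q2 := hP (i + n - 1 - t)
    have p1 : P (i + t) - P i = P (i + n) - P (i + n - t) := by
      rcases Nat.eq_zero_or_pos t with h | h
      · subst h; simp
      · exact pal t h ht
    have p2 : P (i + t + 1) - P i = P (i + n) - P (i + n - 1 - t) := by
      rcases Nat.lt_or_ge (t + 1) n with h | h
      · have := pal (t + 1) (by omega) h
        push_cast at this
        rw [show i + (t : ℤ) + 1 = i + (t + 1) by ring,
          show i + (n : ℤ) - 1 - t = i + n - (t + 1) by ring]; exact this
      · have : n = t + 1 := by omega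
        subst this; push_cast
        rw [show i + ((t : ℤ) + 1) - 1 - t = i by ring, ← add_assoc]
    rw [show i + (n : ℤ) - 1 - t + 1 = i + n - t by ring] at q2
    exact bv_inj (by omega)
  obtain ⟨c, hc⟩ : ∃ c, c = i + n - 1 := ⟨_, rfl⟩
  have xc : x c = false := by
    have := xpal 0 (by omega)
    rw [hc, ← x1]; simpa using this.symm
  have xc1 : x (c + 1) = true := by rw [hc, ← x2]; congr 1; ring
  obtain ⟨D, hD⟩ : ∃ D : ℕ, (D : ℤ) = j - 1 - i := ⟨(j - 1 - i).toNat, by omega⟩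
  have xl : ∀ t : ℕ, t < n → x (c - t) = x (i + t) := fun t ht => by
    rw [xpal t ht, hc]
  have xr : ∀ t : ℕ, 1 ≤ t → t < D → x (c + 1 + t) = x (i + t) := fun t h1 h2 => by
    rw [← hper (i + t) (by omega) (by omega), hc]; congr 1; ring
  have xrD : x (c + 1 + D) = true := by rw [← x4]; congr 1; omega
  by_cases hDn : D < n
  · refine hM c D xc xc1 (by omega) (fun t h1 h2 => ?_) ?_ xrD
    · rw [xl t (by omega), xr t h1 h2]
    · rw [xl D hDn, ← x3]; congr 1; omega
  push Not at hDn
  by_cases hagree : ∀ t : ℕ, 1 ≤ t → t ≤ D → x (c - t) = x (c + 1 + t)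
  · have r1 := refl_sum x P hP c D hagree
    have r2 := refl_sum x P hP c (D - n) fun t a b => hagree t a (by omega)
    have h1 := hmin' i (c - D) (by omega)
    have h2 := hH (c - D)
    rw [show c - (D : ℤ) + n = c - (D - n : ℕ) by omega] at h2
    rw [show c + 2 + (D : ℤ) = j + n by omega] at r1
    rw [show c + 2 + ((D - n : ℕ) : ℤ) = j by omega] at r2
    omega
  · push Not at hagree
    classical
    obtain ⟨T, ⟨hT1, hTD, hne⟩, hfirst⟩ : ∃ T : ℕ, (1 ≤ T ∧ T ≤ D ∧ x (c - T) ≠ x (c + 1 + T)) ∧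
        ∀ t : ℕ, 1 ≤ t → t < T → x (c - t) = x (c + 1 + t) := by
      refine ⟨Nat.find hagree, Nat.find_spec hagree, fun t h1 h2 => ?_⟩
      by_contra h3
      exact Nat.find_min hagree h2 ⟨h1, by have := (Nat.find_spec hagree).2.1; omega, h3⟩
    have hval : x (c - T) = true ∧ x (c + 1 + T) = false := by
      have := hM c T xc xc1 hT1 hfirst
      revert this hne
      cases x (c - T) <;> cases x (c + 1 + T) <;> simp
    have hTD' : T < D := by
      rcases Nat.lt_or_ge T D with h | h
      · exact h
      · have : T = D := by omega
        subst this
        rw [xrD] at hval; simp at hval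
    have hTn : n ≤ T := by
      by_contra h
      exact hne (by rw [xl T (by omega), xr T hT1 hTD'])
    have r1 := refl_sum x P hP c (T - 1) fun t a b => hfirst t a (by omega)
    have r2 := refl_sum x P hP c (T - n) fun t a b => hfirst t a (by omega)
    have s1 := hP (c - T)
    have s2 := hP (c + 1 + T)
    rw [hval.1] at s1
    rw [hval.2] at s2
    have h1 := hmin' i (c - T) (by omega)
    have h2 := hH (c - T)
    have h3 := hH (i + T + 1)
    have h4 := hmid (i + T + 1) (by omega) (by omega)
    rw [show c - (T : ℤ) + n = c - (T - n : ℕ) by omega] at h2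
    rw [show c + 2 + ((T - n : ℕ) : ℤ) = i + T + 1 by omega] at r2
    rw [show c + 2 + ((T - 1 : ℕ) : ℤ) = c + 1 + T by omega,
      show c - ((T - 1 : ℕ) : ℤ) = c - T + 1 by omega] at r1
    rw [show c + 1 + (T : ℤ) + 1 = i + T + 1 + n by omega] at s2
    simp [bv] at s1 s2
    omega

theorem bal_of_M (x : ℤ → Bool) (P : ℤ → ℤ) (hP : ∀ k, P (k + 1) = P k + bv (x k))
    (h1 : M1 x) (h2 : M2 x) (n : ℕ) :
    ∀ a b : ℤ, (P (b + n) - P b) - (P (a + n) - P a) ≤ 1 := by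
  classical
  induction n using Nat.strong_induction_on with
  | _ n ih =>
  by_contra hcon
  push Not at hcon
  have hex : ∃ d : ℕ, ∃ i j : ℤ, 2 ≤ (P (j + n) - P j) - (P (i + n) - P i) ∧
      (j - i).natAbs = d := by
    obtain ⟨a, b, h⟩ := hcon
    exact ⟨_, a, b, h, rfl⟩
  obtain ⟨i, j, hun, hd⟩ := Nat.find_spec hex
  have hmin : ∀ i' j' : ℤ, 2 ≤ (P (j' + n) - P j') - (P (i' + n) - P i') →
      (j - i).natAbs ≤ (j' - i').natAbs := by
    intro i' j' h
    rw [hd]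
    exact Nat.find_min' hex ⟨i', j', h, rfl⟩
  rcases lt_trichotomy i j with hij | hij | hij
  · exact main_lemma x P hP h1 n ih i j hij hun hmin
  · subst hij; omega
  · refine main_lemma (fun k => x (-1 - k)) (fun k => - P (-k)) ?_ (M2_rev x h2) n ?_
      (-i - n) (-j - n) (by omega) ?_ ?_
    · intro k
      have := hP (-1 - k)
      rw [show -1 - k + 1 = -k by ring] at this
      simp only [show -(k + 1) = -1 - k by ring]
      omega
    · intro k hk a b
      have := ih k hk (-a - k) (-b - k)
      simp only [show -(a + (k : ℤ)) = -a - k by ring, show -(b + (k : ℤ)) = -b - k by ring]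
      simp only [sub_add_cancel] at this
      omega
    · simp only [sub_add_cancel, neg_neg, neg_sub, sub_neg_eq_add]
      rw [add_comm (n : ℤ) j, add_comm (n : ℤ) i]; omega
    · intro i' j' h
      have := hmin (-i' - n) (-j' - n) (by
        simp only [show -(i' + (n : ℤ)) = -i' - n by ring,
          show -(j' + (n : ℤ)) = -j' - n by ring] at h
        simp only [sub_add_cancel]; omega)
      omega

theorem bal_mem (x : ℤ → Bool) (h : BalancedZ x) : memXF x := by
  have key : ∀ (a b : Bool) (v : List Bool) (i : ℤ), a ≠ b →
      ¬ OccAt ([a] ++ v ++ [a, b] ++ v.reverse ++ [b]) x i := by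
    intro a b v i hab ho
    have e : [a] ++ v ++ [a, b] ++ v.reverse ++ [b] =
      ([a] ++ v ++ [a]) ++ ([b] ++ v.reverse ++ [b]) := by simp
    rw [e, occ_append] at ho
    have := h _ _ ⟨_, ho.1⟩ ⟨_, ho.2⟩ (by simp)
    cases a <;> cases b <;> simp [List.count_cons, List.count_append] at this hab
    all_goals
      rw [abs_le] at this
      omega
  intro v
  exact ⟨fun ⟨i, hi⟩ => key false true v i (by simp) hi,
    fun ⟨i, hi⟩ => key true false v i (by simp) hi⟩

theorem stmt14 (x : ℤ → Bool) : memXF x ↔ BalancedZ x := by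
  refine ⟨fun h => ?_, bal_mem x⟩
  rintro u v ⟨i, hi⟩ ⟨j, hj⟩ huv
  obtain ⟨P, hP⟩ := exists_P x
  have hb := bal_of_M x P hP (memXF_M1 x h) (memXF_M2 x h) u.length
  have h1 := occ_count P x hP u i hi
  have h2 := occ_count P x hP v j hj
  rw [← huv] at h2
  have := hb i j
  have := hb j i
  rw [abs_le]
  omega
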